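/- arXiv:math/9802069 — 2 statements merged into one kernel-verified Lean document; each statement's English description precedes it below -/
import Mathlib

section
/- Let p be an odd prime. For every natural number i, the sum of even powers of the odd numbers up to p-2 satisfies, in ℤ/pℤ: ∑_{k=1}^{(p-1)/2} (2k-1)^{2i} = (1 - 2^{-1}·2^{2i}) · ε_p(2i), where 2^{-1} is the inverse of 2 in ℤ/pℤ. -/
/-!
Write `p = 2m + 1`. Every residue in `1, …, p - 1` is either `2k - 1` or `2k` with `1 ≤ k ≤ m`, and
`k ↦ m + 1 - k` turns `2k` into `p - (2k - 1)`. As the exponent is even, the odd and the even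
numbers therefore contribute equally, so twice the sum is the sum of `x ^ (2i)` over all units of
`ℤ/pℤ`, which is `ε_p(2i)` (`FiniteField.sum_pow_units`). Where `ε_p(2i) ≠ 0`, Fermat's little
theorem gives `2 ^ (2i) = 1`, so the factor on the right is `1 - 2⁻¹ = 2⁻¹`.
-/

theorem sum_Icc_pow_zmod (p : ℕ) [Fact p.Prime] (j : ℕ) :
    ∑ n ∈ Finset.Icc 1 (p - 1), (n : ZMod p) ^ j = if (p - 1) ∣ j then (-1 : ZMod p) else 0 := by
  have h := FiniteField.sum_pow_units (ZMod p) j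
  rw [ZMod.card] at h
  rw [← h]
  symm
  refine Finset.sum_bij (fun x _ => (x : ZMod p).val) ?_ ?_ ?_ ?_
  · intro x _
    have h1 := ZMod.val_lt (x : ZMod p)
    have h2 : (x : ZMod p).val ≠ 0 := by
      rw [Ne, ZMod.val_eq_zero]
      exact x.ne_zero
    rw [Finset.mem_Icc]
    omega
  · intro x _ y _ hxy
    exact Units.ext (ZMod.val_injective p hxy)
  · intro n hn
    rw [Finset.mem_Icc] at hn
    have hlt : n < p := by omega
    have hne : (n : ZMod p) ≠ 0 := by
      rw [Ne, ZMod.natCast_eq_zero_iff]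
      exact Nat.not_dvd_of_pos_of_lt (by omega) hlt
    exact ⟨Units.mk0 _ hne, Finset.mem_univ _, by simp [ZMod.val_cast_of_lt hlt]⟩
  · intro x _
    simp

theorem sum_Icc_two_mul {M : Type*} [AddCommMonoid M] (f : ℕ → M) (m : ℕ) :
    ∑ n ∈ Finset.Icc 1 (2 * m), f n =
      ∑ k ∈ Finset.Icc 1 m, f (2 * k - 1) + ∑ k ∈ Finset.Icc 1 m, f (2 * k) := by
  induction m with
  | zero => simp
  | succ m ih =>
    rw [show 2 * (m + 1) = 2 * m + 1 + 1 by ring, Finset.sum_Icc_succ_top (by omega),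
      Finset.sum_Icc_succ_top (by omega), ih, Finset.sum_Icc_succ_top (by omega),
      Finset.sum_Icc_succ_top (by omega), show 2 * (m + 1) - 1 = 2 * m + 1 by omega,
      show 2 * (m + 1) = 2 * m + 1 + 1 by ring]
    abel

/-- For an odd prime `p` and any natural `i`, the sum of the `2i`-th powers of
the odd numbers `1, 3, ..., p-2` satisfies, in `ℤ/pℤ`:
`∑_{k=1}^{(p-1)/2} (2k-1)^{2i} = (1 - 2⁻¹·2^{2i}) · ε_p(2i)` where
`ε_p(m) = -1` if `p-1 ∣ m` and `0` otherwise. -/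
theorem odd_numbers_power_sum (p : ℕ) (hp : p.Prime) (hodd : Odd p) (i : ℕ) :
    ∑ k ∈ Finset.Icc 1 ((p - 1) / 2), (2 * (k : ZMod p) - 1) ^ (2 * i) =
      (1 - (2 : ZMod p)⁻¹ * 2 ^ (2 * i)) *
        (if (p - 1) ∣ 2 * i then (-1 : ZMod p) else 0) := by
  haveI : Fact p.Prime := ⟨hp⟩
  obtain ⟨m, hm⟩ := hodd
  have hm2 : (p - 1) / 2 = m := by omega
  have h2 : (2 : ZMod p) ≠ 0 := by
    have : ((2 : ℕ) : ZMod p) ≠ 0 := by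
      rw [Ne, ZMod.natCast_eq_zero_iff]
      intro h
      have := Nat.le_of_dvd (by norm_num) h
      have := hp.two_le
      omega
    exact_mod_cast this
  have hp0 : 2 * (m : ZMod p) + 1 = 0 := by
    have : ((2 * m + 1 : ℕ) : ZMod p) = 0 := by rw [← hm]; simp
    exact_mod_cast this
  have hall := sum_Icc_pow_zmod p (2 * i)
  rw [show Finset.Icc 1 (p - 1) = Finset.Icc 1 (2 * m) by rw [hm]; simp, sum_Icc_two_mul] at hall
  have hoddsum : ∑ k ∈ Finset.Icc 1 m, ((2 * k - 1 : ℕ) : ZMod p) ^ (2 * i) =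
      ∑ k ∈ Finset.Icc 1 m, (2 * (k : ZMod p) - 1) ^ (2 * i) := by
    refine Finset.sum_congr rfl fun k hk => ?_
    rw [Finset.mem_Icc] at hk
    rw [Nat.cast_sub (by omega)]
    push_cast
    rfl
  have hevensum : ∑ k ∈ Finset.Icc 1 m, ((2 * k : ℕ) : ZMod p) ^ (2 * i) =
      ∑ k ∈ Finset.Icc 1 m, (2 * (k : ZMod p) - 1) ^ (2 * i) := by
    refine Finset.sum_bij' (fun k _ => m + 1 - k) (fun k _ => m + 1 - k) ?_ ?_ ?_ ?_ ?_
    · intro k hk; rw [Finset.mem_Icc] at *; omega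
    · intro k hk; rw [Finset.mem_Icc] at *; omega
    · intro k hk; rw [Finset.mem_Icc] at hk; omega
    · intro k hk; rw [Finset.mem_Icc] at hk; omega
    · intro k hk
      rw [Finset.mem_Icc] at hk
      rw [Nat.cast_sub (by omega), pow_mul, pow_mul]
      congr 1
      push_cast
      -- The bases are negatives of each other, because `2 * m + 1 = 0` in `ZMod p`.
      rw [show 2 * ((m : ZMod p) + 1 - k) - 1 = -(2 * k) by linear_combination hp0, neg_sq]
  rw [hoddsum, hevensum] at hall
  rw [hm2]
  apply mul_left_cancel₀ h2
  rw [two_mul, hall]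
  split_ifs with hd
  · obtain ⟨c, hc⟩ := hd
    have h1 : (2 : ZMod p) ^ (2 * i) = 1 := by
      rw [hc, pow_mul, ZMod.pow_card_sub_one_eq_one h2, one_pow]
    rw [h1]
    field_simp
    ring
  · simp
end

section
/- Let f be a nonzero real number, K a positive real number, and k a natural number. Then the regularized Fresnel moment integral converges: lim_{ε→0⁺} ∫_{-∞}^{∞} α^{2k} · exp((iπf/(2K) - ε)·α²) dα = exp(iπ·sgn(f)/4) · (2K/|f|)^{1/2} · (iK/(2πf))^k · (2k)!/k!, where the limit is taken as ε tends to 0 from above and sgn(f) is the sign of f. -/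
open MeasureTheory Topology Real

/-!
For `ε > 0` put `b = ε - iπf/(2K)`, which has positive real part. Integrating by parts against
`-(2b)⁻¹ exp(-bx²)` raises the degree of the moment by two at the cost of a factor `(2k+1)/(2b)`,
so by induction from the complex Gaussian integral
`∫ x^{2k} exp(-bx²) dx = (π/b)^{1/2} (1/(4b))^k (2k)!/k!` (`integral_pow_mul_cexp_neg_mul_sq`).
At `ε = 0` the number `π/b` is the nonzero purely imaginary `2iK/f`, which is off the branch cut of
the principal square root. The closed form is therefore continuous in `ε` at `0`, and the phase
`exp(iπ sgn(f)/4)` is that of the principal square root of `2iK/f` (`cpow_half_of_imaginary`).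
-/

theorem integrable_pow_mul_cexp_neg_mul_sq {b : ℂ} (hb : 0 < b.re) (n : ℕ) :
    Integrable (fun x : ℝ => (x : ℂ) ^ n * Complex.exp (-b * (x : ℂ) ^ 2)) := by
  have h := integrable_rpow_mul_exp_neg_mul_sq hb (s := n)
    (by have : (0 : ℝ) ≤ n := n.cast_nonneg
        linarith)
  refine h.mono (Continuous.aestronglyMeasurable (by fun_prop)) (.of_forall fun x => ?_)
  rw [norm_mul, norm_mul, norm_cexp_neg_mul_sq, norm_pow, Complex.norm_real, rpow_natCast,
    norm_pow, norm_of_nonneg (exp_pos _).le]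

theorem integral_pow_add_two_mul_cexp_neg_mul_sq {b : ℂ} (hb : 0 < b.re) (n : ℕ) :
    ∫ x : ℝ, (x : ℂ) ^ (n + 2) * Complex.exp (-b * (x : ℂ) ^ 2) =
      (n + 1) / (2 * b) * ∫ x : ℝ, (x : ℂ) ^ n * Complex.exp (-b * (x : ℂ) ^ 2) := by
  have hb0 : b ≠ 0 := by
    rintro rfl
    simp at hb
  have hu (x : ℝ) : HasDerivAt (fun x : ℝ => (x : ℂ) ^ (n + 1)) ((n + 1) * (x : ℂ) ^ n) x := by
    simpa using (hasDerivAt_pow (n + 1) (x : ℂ)).comp_ofReal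
  have hv (x : ℝ) : HasDerivAt (fun x : ℝ => -(2 * b)⁻¹ * Complex.exp (-b * (x : ℂ) ^ 2))
      ((x : ℂ) * Complex.exp (-b * (x : ℂ) ^ 2)) x := by
    have h := ((((hasDerivAt_pow 2 (x : ℂ)).const_mul (-b)).cexp).const_mul
      (-(2 * b)⁻¹)).comp_ofReal
    convert h using 1
    field_simp
    push_cast
    ring
  have key := integral_mul_deriv_eq_deriv_mul_of_integrable (fun x _ => hu x) (fun x _ => hv x)
    ?_ ?_ ?_
  · rw [← integral_const_mul]
    rw [← integral_neg] at key
    refine Eq.trans (integral_congr_ae (.of_forall fun x => ?_))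
      (key.trans (integral_congr_ae (.of_forall fun x => ?_)))
    · ring
    · simp only []
      field_simp
  · refine (integrable_pow_mul_cexp_neg_mul_sq hb (n + 2)).congr (.of_forall fun x => ?_)
    simp only [Pi.mul_apply]
    ring
  · refine ((integrable_pow_mul_cexp_neg_mul_sq hb n).const_mul
      (-(2 * b)⁻¹ * (n + 1))).congr (.of_forall fun x => ?_)
    simp only [Pi.mul_apply]
    ring
  · refine ((integrable_pow_mul_cexp_neg_mul_sq hb (n + 1)).const_mul
      (-(2 * b)⁻¹)).congr (.of_forall fun x => ?_)
    simp only [Pi.mul_apply]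
    ring

theorem integral_pow_mul_cexp_neg_mul_sq {b : ℂ} (hb : 0 < b.re) (k : ℕ) :
    ∫ x : ℝ, (x : ℂ) ^ (2 * k) * Complex.exp (-b * (x : ℂ) ^ 2) =
      (π / b) ^ (1 / 2 : ℂ) * (1 / (4 * b)) ^ k * ((2 * k).factorial : ℂ) /
        (k.factorial : ℂ) := by
  have hb0 : b ≠ 0 := by
    rintro rfl
    simp at hb
  induction k with
  | zero => simpa using integral_gaussian_complex hb
  | succ k ih =>
    rw [show 2 * (k + 1) = 2 * k + 2 by ring, integral_pow_add_two_mul_cexp_neg_mul_sq hb, ih,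
      Nat.factorial_succ, Nat.factorial_succ, Nat.factorial_succ]
    have h1 : (k.factorial : ℂ) ≠ 0 := mod_cast k.factorial_ne_zero
    have h2 : (k : ℂ) + 1 ≠ 0 := mod_cast k.succ_ne_zero
    rw [pow_succ]
    generalize ((π : ℂ) / b) ^ (1 / 2 : ℂ) = g
    generalize (1 / (4 * b)) ^ k = t
    push_cast
    field_simp
    ring

/-- The principal square root of the imaginary number `2iK/f`, with modulus and phase separated. -/
theorem cpow_half_of_imaginary {f K : ℝ} (hf : f ≠ 0) (hK : 0 < K) :
    (2 * (K : ℂ) / f * Complex.I) ^ (1 / 2 : ℂ) =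
      Complex.exp (Complex.I * (π : ℂ) * ((Real.sign f : ℝ) : ℂ) / 4) *
        ((Real.sqrt (2 * K / |f|) : ℝ) : ℂ) := by
  have hr : 0 < 2 * K / |f| := by positivity
  have hs : ((Real.sqrt (2 * K / |f|) : ℝ) : ℂ) =
      Complex.exp (((Real.log (2 * K / |f|) : ℝ) : ℂ) * (1 / 2)) := by
    rw [Real.sqrt_eq_rpow, Real.rpow_def_of_pos hr]
    push_cast
    rfl
  rw [hs, ← Complex.exp_add]
  rcases lt_or_gt_of_ne hf with h | h
  · have e : 2 * (K : ℂ) / f * Complex.I = ((2 * K / |f| : ℝ) : ℂ) * (-Complex.I) := by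
      rw [abs_of_neg h]
      push_cast
      rw [div_neg]
      ring
    rw [e, Complex.cpow_def_of_ne_zero
        (mul_ne_zero (mod_cast hr.ne') (neg_ne_zero.mpr Complex.I_ne_zero)),
      Complex.log_ofReal_mul hr (neg_ne_zero.mpr Complex.I_ne_zero), Complex.log_neg_I,
      Real.sign_of_neg h]
    congr 1
    push_cast
    ring
  · have e : 2 * (K : ℂ) / f * Complex.I = ((2 * K / |f| : ℝ) : ℂ) * Complex.I := by
      rw [abs_of_pos h]
      push_cast
      rfl
    rw [e, Complex.cpow_def_of_ne_zero (mul_ne_zero (mod_cast hr.ne') Complex.I_ne_zero),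
      Complex.log_ofReal_mul hr Complex.I_ne_zero, Complex.log_I, Real.sign_of_pos h]
    congr 1
    push_cast
    ring

/-- The regularized Fresnel moment integral: for `f ≠ 0`, `K > 0` and `k : ℕ`,
`lim_{ε→0⁺} ∫ α^{2k} exp((iπf/(2K) - ε)α²) dα
  = e^{iπ sgn(f)/4} · (2K/|f|)^{1/2} · (iK/(2πf))^k · (2k)!/k!`. -/
theorem fresnel_moment_integral (f K : ℝ) (hf : f ≠ 0) (hK : 0 < K) (k : ℕ) :
    Filter.Tendsto
      (fun ε : ℝ => ∫ α : ℝ,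
        (α : ℂ) ^ (2 * k) *
          Complex.exp ((Complex.I * (π : ℂ) * (f : ℂ) / (2 * (K : ℂ)) - (ε : ℂ)) *
            (α : ℂ) ^ 2))
      (𝓝[>] 0)
      (𝓝 (Complex.exp (Complex.I * (π : ℂ) * ((Real.sign f : ℝ) : ℂ) / 4) *
        ((Real.sqrt (2 * K / |f|) : ℝ) : ℂ) *
        (Complex.I * (K : ℂ) / (2 * (π : ℂ) * (f : ℂ))) ^ k *
        ((2 * k).factorial : ℂ) / (k.factorial : ℂ))) := by
  have hfC : (f : ℂ) ≠ 0 := mod_cast hf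
  have hKC : (K : ℂ) ≠ 0 := mod_cast hK.ne'
  have hpi : (π : ℂ) ≠ 0 := mod_cast pi_ne_zero
  set c : ℂ := Complex.I * (π : ℂ) * (f : ℂ) / (2 * (K : ℂ)) with hc
  have hc_im : c = ((π * f / (2 * K) : ℝ) : ℂ) * Complex.I := by
    rw [hc]
    push_cast
    ring
  have hc0 : c ≠ 0 := by
    rw [hc]
    simp [hfC, hKC, hpi]
  have hroot : (π : ℂ) / (-c) = 2 * (K : ℂ) / f * Complex.I := by
    rw [hc]
    field_simp
    simp
  have hfour : 1 / (4 * -c) = Complex.I * (K : ℂ) / (2 * (π : ℂ) * (f : ℂ)) := by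
    rw [hc]
    field_simp
    rw [Complex.I_sq]
    norm_num
  have hb : Filter.Tendsto (fun ε : ℝ => (ε : ℂ) - c) (𝓝[>] 0) (𝓝 (-c)) := by
    have h : Continuous fun ε : ℝ => (ε : ℂ) - c := by fun_prop
    simpa using (h.tendsto 0).mono_left nhdsWithin_le_nhds
  have hslit : (π : ℂ) / (-c) ∈ Complex.slitPlane := by
    have e : (π : ℂ) / (-c) = ((2 * K / f : ℝ) : ℂ) * Complex.I := by
      rw [hroot]
      push_cast
      rfl
    refine Or.inr ?_
    rw [e, Complex.im_ofReal_mul, Complex.I_im, mul_one]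
    positivity
  rw [← cpow_half_of_imaginary hf hK, ← hroot, ← hfour]
  have hlim : Filter.Tendsto (fun ε : ℝ => ((π : ℂ) / ((ε : ℂ) - c)) ^ (1 / 2 : ℂ) *
      (1 / (4 * ((ε : ℂ) - c))) ^ k * ((2 * k).factorial : ℂ) / (k.factorial : ℂ)) (𝓝[>] 0)
      (𝓝 (((π : ℂ) / (-c)) ^ (1 / 2 : ℂ) * (1 / (4 * -c)) ^ k * ((2 * k).factorial : ℂ) /
        (k.factorial : ℂ))) :=
    ((((tendsto_const_nhds.div hb (neg_ne_zero.mpr hc0)).cpow tendsto_const_nhds hslit).mul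
      ((tendsto_const_nhds.div (hb.const_mul 4)
        (mul_ne_zero (by norm_num) (neg_ne_zero.mpr hc0))).pow k)).mul_const _).div_const _
  refine hlim.congr' ?_
  filter_upwards [self_mem_nhdsWithin] with ε hε
  have hre : 0 < ((ε : ℂ) - c).re := by
    rw [hc_im, Complex.sub_re, Complex.re_ofReal_mul]
    simpa using hε
  rw [← integral_pow_mul_cexp_neg_mul_sq hre k]
  simp only [neg_sub]
end
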